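/- Let Y be a Banach space with the local diameter 2 property + and let X be a closed subspace of Y which is an almost isometric ideal in Y. Then X has the local diameter 2 property +. -/

import Mathlib

/-- A closed subspace `X` of a Banach space `Y` is an almost isometric ideal (ai-ideal)
if for every `ε > 0` and every finite-dimensional subspace `E ⊆ Y` there is a linear map
`T : E → X` fixing `X ∩ E` with `(1-ε)‖e‖ ≤ ‖Te‖ ≤ (1+ε)‖e‖` for all `e ∈ E`. -/
def IsAiIdeal {Y : Type*} [NormedAddCommGroup Y] [NormedSpace ℝ Y]
    (X : Subspace ℝ Y) : Prop :=
  ∀ ε : ℝ, 0 < ε → ∀ E : Subspace ℝ Y, FiniteDimensional ℝ E →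
    ∃ T : E →ₗ[ℝ] X,
      (∀ e : E, (e : Y) ∈ X → ((T e : X) : Y) = (e : Y)) ∧
      (∀ e : E, (1 - ε) * ‖(e : Y)‖ ≤ ‖((T e : X) : Y)‖ ∧
        ‖((T e : X) : Y)‖ ≤ (1 + ε) * ‖(e : Y)‖)

/-!
Almost isometric maps that fix `X`, taken along ever larger finite-dimensional subspaces of `Y`,
form a net of linear maps `T i : Y → X` with `T i x = x` eventually and `‖T i y‖ → ‖y‖`. For a
functional `f` on `X`, the limit `g` of `f ∘ T i` along an ultrafilter is an extension of `f` to `Y`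
of the same norm. The LD2P+ of `Y`, applied to `g`, produces a point `z`, which can be moved into
the open unit ball; the conditions on `z` are then all strict inequalities between limits, so that
`T i z` satisfies the corresponding conditions in `X` for some `i`.
-/

open Filter Topology

/-- The local diameter 2 property +: in every slice of the unit ball of `E`, each point of norm one
has points of the slice at distance arbitrarily close to `2`. -/
def HasLD2PPlus (E : Type*) [NormedAddCommGroup E] [NormedSpace ℝ E] : Prop :=
  ∀ f : E →L[ℝ] ℝ, ‖f‖ = 1 → ∀ ε : ℝ, 0 < ε → ∀ δ : ℝ, 0 < δ →
    ∀ x : E, ‖x‖ = 1 → 1 - ε < f x →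
      ∃ y : E, ‖y‖ ≤ 1 ∧ 1 - ε < f y ∧ 2 - δ < ‖x - y‖

theorem HasLD2PPlus.exists_norm_lt_one {E : Type*} [NormedAddCommGroup E] [NormedSpace ℝ E]
    (hE : HasLD2PPlus E) {f : E →L[ℝ] ℝ} (hf : ‖f‖ = 1) {ε δ : ℝ} (hε : 0 < ε) (hδ : 0 < δ)
    {x : E} (hx : ‖x‖ = 1) (hfx : 1 - ε < f x) :
    ∃ y : E, ‖y‖ < 1 ∧ 1 - ε < f y ∧ 2 - δ < ‖x - y‖ := by
  obtain ⟨y, hy, hfy, hxy⟩ := hE f hf ε hε δ hδ x hx hfx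
  have y_mem_closure : y ∈ closure (Metric.ball (0 : E) 1) := by
    rwa [closure_ball 0 one_ne_zero, mem_closedBall_zero_iff]
  have isOpen_slice_far : IsOpen {z : E | 1 - ε < f z ∧ 2 - δ < ‖x - z‖} :=
    (isOpen_lt continuous_const f.continuous).inter
      (isOpen_lt continuous_const (continuous_const.sub continuous_id).norm)
  obtain ⟨z, hz, hz_ball⟩ := mem_closure_iff.1 y_mem_closure _ isOpen_slice_far ⟨hfy, hxy⟩
  exact ⟨z, mem_ball_zero_iff.1 hz_ball, hz⟩

/-- A family of linear maps from `Y` to a subspace `X` which, along the filter `l`, eventually fixes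
each point of `X` and asymptotically preserves the norm of each point of `Y`. It replaces the
finite-dimensional maps in the definition of an almost isometric ideal by a single net of maps
defined on all of `Y`, which need not be continuous. -/
structure IsAsymptoticRetraction {ι 𝕜 Y : Type*} [NormedField 𝕜] [NormedAddCommGroup Y]
    [NormedSpace 𝕜 Y] {X : Submodule 𝕜 Y} (T : ι → Y →ₗ[𝕜] X) (l : Filter ι) : Prop where
  eventually_apply_coe : ∀ x : X, ∀ᶠ i in l, T i x = x
  tendsto_norm_apply : ∀ y : Y, Tendsto (fun i => ‖T i y‖) l (𝓝 ‖y‖)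

theorem IsAiIdeal.exists_linearMap_of_finset {Y : Type*} [NormedAddCommGroup Y] [NormedSpace ℝ Y]
    {X : Subspace ℝ Y} (hX : IsAiIdeal X) (s : Finset Y) {ε : ℝ} (hε : 0 < ε) :
    ∃ T : Y →ₗ[ℝ] X, (∀ x : X, (x : Y) ∈ s → T x = x) ∧
      ∀ y ∈ s, (1 - ε) * ‖y‖ ≤ ‖T y‖ ∧ ‖T y‖ ≤ (1 + ε) * ‖y‖ := by
  obtain ⟨S, hS_fix, hS_norm⟩ := hX ε hε (Submodule.span ℝ s) (FiniteDimensional.span_finset ℝ s)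
  obtain ⟨T, hT⟩ := S.exists_extend
  have T_apply (y : Y) (hy : y ∈ s) : T y = S ⟨y, Submodule.subset_span hy⟩ :=
    LinearMap.congr_fun hT ⟨y, Submodule.subset_span hy⟩
  refine ⟨T, fun x hx => ?_, fun y hy => ?_⟩
  · rw [T_apply x hx]
    exact Subtype.ext (hS_fix _ x.2)
  · rw [T_apply y hy]
    exact hS_norm ⟨y, Submodule.subset_span hy⟩

theorem IsAiIdeal.exists_isAsymptoticRetraction {Y : Type*} [NormedAddCommGroup Y]
    [NormedSpace ℝ Y] {X : Subspace ℝ Y} (hX : IsAiIdeal X) :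
    ∃ T : Finset Y × ℕ → Y →ₗ[ℝ] X, IsAsymptoticRetraction T atTop := by
  choose T hT_fix hT_norm using fun i : Finset Y × ℕ =>
    hX.exists_linearMap_of_finset i.1 (Nat.one_div_pos_of_nat (α := ℝ) (n := i.2))
  have eventually_mem (y : Y) : ∀ᶠ i : Finset Y × ℕ in atTop, y ∈ i.1 := by
    filter_upwards [eventually_ge_atTop ({y}, 0)] with i hi
    exact Finset.singleton_subset_iff.1 hi.1
  have error_tendsto : Tendsto (fun i : Finset Y × ℕ => 1 / ((i.2 : ℝ) + 1)) atTop (𝓝 0) := by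
    rw [← prod_atTop_atTop_eq]
    exact tendsto_one_div_add_atTop_nhds_zero_nat.comp tendsto_snd
  refine ⟨T, fun x => (eventually_mem x).mono fun i => hT_fix i x, fun y => ?_⟩
  refine tendsto_of_tendsto_of_tendsto_of_le_of_le' ?_ ?_
    ((eventually_mem y).mono fun i hi => (hT_norm i y hi).1)
    ((eventually_mem y).mono fun i hi => (hT_norm i y hi).2)
  · simpa using (error_tendsto.const_sub 1).mul_const ‖y‖
  · simpa using (error_tendsto.const_add 1).mul_const ‖y‖

theorem exists_continuousLinearMap_tendsto_comp {ι 𝕜 X Y F : Type*} [NontriviallyNormedField 𝕜]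
    [SeminormedAddCommGroup X] [NormedSpace 𝕜 X] [SeminormedAddCommGroup Y] [NormedSpace 𝕜 Y]
    [NormedAddCommGroup F] [NormedSpace 𝕜 F] [ProperSpace F] {U : Ultrafilter ι}
    {T : ι → Y →ₗ[𝕜] X} (hT : ∀ y, Tendsto (fun i => ‖T i y‖) U (𝓝 ‖y‖)) (f : X →L[𝕜] F) :
    ∃ g : Y →L[𝕜] F, ‖g‖ ≤ ‖f‖ ∧ ∀ y, Tendsto (fun i => f (T i y)) U (𝓝 (g y)) := by
  have exists_limit (y : Y) : ∃ a, Tendsto (fun i => f (T i y)) U (𝓝 a) := by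
    have eventually_mem_closedBall :
        ∀ᶠ i in U, f (T i y) ∈ Metric.closedBall 0 (‖f‖ * (‖y‖ + 1)) := by
      filter_upwards [(hT y).eventually_le_const (lt_add_one ‖y‖)] with i hi
      exact mem_closedBall_zero_iff.2 (f.le_opNorm_of_le hi)
    obtain ⟨a, -, ha⟩ := (isCompact_closedBall (0 : F) _).ultrafilter_le_nhds
      (U.map fun i => f (T i y)) (le_principal_iff.2 eventually_mem_closedBall)
    exact ⟨a, ha⟩
  choose g hg using exists_limit
  let gₗ : Y →ₗ[𝕜] F :=
    linearMapOfTendsto g (fun i => (f : X →ₗ[𝕜] F) ∘ₗ T i) (tendsto_pi_nhds.2 hg)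
  have norm_le (y : Y) : ‖gₗ y‖ ≤ ‖f‖ * ‖y‖ :=
    le_of_tendsto_of_tendsto' (hg y).norm ((hT y).const_mul ‖f‖) fun i => f.le_opNorm (T i y)
  exact ⟨gₗ.mkContinuous ‖f‖ norm_le, gₗ.mkContinuous_norm_le (norm_nonneg f) norm_le, hg⟩

namespace IsAsymptoticRetraction

variable {ι 𝕜 Y : Type*} [NormedAddCommGroup Y]

theorem mono [NormedField 𝕜] [NormedSpace 𝕜 Y] {X : Submodule 𝕜 Y} {T : ι → Y →ₗ[𝕜] X}
    {l l' : Filter ι} (hT : IsAsymptoticRetraction T l) (h : l' ≤ l) :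
    IsAsymptoticRetraction T l' :=
  ⟨fun x => h (hT.eventually_apply_coe x), fun y => (hT.tendsto_norm_apply y).mono_left h⟩

theorem tendsto_norm_coe_sub_apply [NormedField 𝕜] [NormedSpace 𝕜 Y] {X : Submodule 𝕜 Y}
    {T : ι → Y →ₗ[𝕜] X} {l : Filter ι} (hT : IsAsymptoticRetraction T l) (x : X) (y : Y) :
    Tendsto (fun i => ‖x - T i y‖) l (𝓝 ‖(x : Y) - y‖) := by
  refine (hT.tendsto_norm_apply (x - y)).congr' ?_
  filter_upwards [hT.eventually_apply_coe x] with i hi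
  rw [map_sub, hi]

theorem exists_extension_norm_eq [NontriviallyNormedField 𝕜] [NormedSpace 𝕜 Y]
    {X : Submodule 𝕜 Y} {F : Type*} [NormedAddCommGroup F] [NormedSpace 𝕜 F] [ProperSpace F]
    {T : ι → Y →ₗ[𝕜] X} {U : Ultrafilter ι} (hT : IsAsymptoticRetraction T U) (f : X →L[𝕜] F) :
    ∃ g : Y →L[𝕜] F, (∀ x : X, g x = f x) ∧ ‖g‖ = ‖f‖ ∧
      ∀ y, Tendsto (fun i => f (T i y)) U (𝓝 (g y)) := by
  obtain ⟨g, g_norm_le, hg⟩ := exists_continuousLinearMap_tendsto_comp hT.tendsto_norm_apply f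
  have g_extends (x : X) : g x = f x := by
    refine tendsto_nhds_unique (hg x) (tendsto_const_nhds.congr' ?_)
    filter_upwards [hT.eventually_apply_coe x] with i hi
    rw [hi]
  have f_norm_le : ‖f‖ ≤ ‖g‖ :=
    f.opNorm_le_bound (norm_nonneg g) fun x => g_extends x ▸ g.le_opNorm x
  exact ⟨g, g_extends, g_norm_le.antisymm f_norm_le, hg⟩

end IsAsymptoticRetraction

theorem LD2P_plus_of_aiIdeal_general {Y : Type*} [NormedAddCommGroup Y] [NormedSpace ℝ Y]
    (hY : HasLD2PPlus Y) {X : Subspace ℝ Y} (hX : IsAiIdeal X) : HasLD2PPlus X := by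
  classical
  intro f hf ε hε δ hδ x hx hfx
  obtain ⟨T, hT_atTop⟩ := hX.exists_isAsymptoticRetraction
  have hT := hT_atTop.mono (Ultrafilter.of_le atTop)
  obtain ⟨g, g_extends, g_norm, tendsto_g⟩ := hT.exists_extension_norm_eq f
  obtain ⟨z, hz, hgz, hxz⟩ :=
    hY.exists_norm_lt_one (g_norm.trans hf) hε hδ hx (hfx.trans_eq (g_extends x).symm)
  have eventually_norm_lt := (hT.tendsto_norm_apply z).eventually_lt_const hz
  have eventually_lt_apply := (tendsto_g z).eventually_const_lt hgz
  have eventually_lt_dist := (hT.tendsto_norm_coe_sub_apply x z).eventually_const_lt hxz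
  obtain ⟨i, hi_norm, hi_slice, hi_dist⟩ :=
    (eventually_norm_lt.and (eventually_lt_apply.and eventually_lt_dist)).exists
  exact ⟨T i z, hi_norm.le, hi_slice, hi_dist⟩

/-- If a Banach space `Y` has the LD2P+ and `X` is a closed subspace of `Y` which is an
almost isometric ideal in `Y`, then `X` has the LD2P+. -/
theorem LD2P_plus_of_aiIdeal {Y : Type*} [NormedAddCommGroup Y] [NormedSpace ℝ Y]
    [CompleteSpace Y]
    (hY : ∀ f : Y →L[ℝ] ℝ, ‖f‖ = 1 → ∀ ε : ℝ, 0 < ε → ∀ δ : ℝ, 0 < δ →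
      ∀ y : Y, ‖y‖ ≤ 1 → f y > 1 - ε → ‖y‖ = 1 →
        ∃ z : Y, ‖z‖ ≤ 1 ∧ f z > 1 - ε ∧ ‖y - z‖ > 2 - δ)
    (X : Subspace ℝ Y) (hXclosed : IsClosed (X : Set Y)) (hX : IsAiIdeal X) :
    ∀ f : X →L[ℝ] ℝ, ‖f‖ = 1 → ∀ ε : ℝ, 0 < ε → ∀ δ : ℝ, 0 < δ →
      ∀ x : X, ‖x‖ ≤ 1 → f x > 1 - ε → ‖x‖ = 1 →
        ∃ y : X, ‖y‖ ≤ 1 ∧ f y > 1 - ε ∧ ‖x - y‖ > 2 - δ := by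
  have hY' : HasLD2PPlus Y := fun g hg ε hε δ hδ y hy hgy => hY g hg ε hε δ hδ y hy.le hgy hy
  exact fun f hf ε hε δ hδ x _ hfx hx =>
    LD2P_plus_of_aiIdeal_general hY' hX f hf ε hε δ hδ x hx hfx
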